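/- Let s₁ ≥ 1 and let ℛ be a linear operator mapping H^s(𝕋) into H^s(𝕋) for every s ≥ s₁, and suppose there are nonnegative constants C_ℛ(s), nondecreasing in s, such that ‖ℛu‖_s ≤ C_ℛ(s₁)‖u‖_s + C_ℛ(s)‖u‖_{s₁} for all s ≥ s₁ and u ∈ H^s(𝕋). If C_ℛ(s₁) < 1/4, then Id + ℛ is invertible on H^{s₁}(𝕋) and its inverse satisfies ‖(Id+ℛ)^{−1}v‖_{s₁} ≤ 2‖v‖_{s₁}, and for every s ≥ s₁ and v ∈ H^s(𝕋): ‖(Id+ℛ)^{−1}v‖_s ≤ 2‖v‖_s + 4C_ℛ(s)‖v‖_{s₁}. -/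

import Mathlib

/-!
`Id + R` is inverted by the Picard iteration `w₀ = 0`, `wₙ₊₁ = v - R wₙ`.

At `s = s₁` the tame bound reads `‖R u‖_{s₁} ≤ 2 C(s₁) ‖u‖_{s₁}` with `2 C(s₁) < 1/2`, so the iterates
stay in the ball of radius `2‖v‖_{s₁}` and satisfy `‖wₙ₊ₖ - wₙ‖_{s₁} ≤ 2⁻ⁿ · 2‖v‖_{s₁}`. Since each
coefficient is bounded by the `H^{s₁}` norm, they converge coefficientwise to some `w`, and a Fatou
argument (`seqNorm_le_of_tendsto`) gives `‖w - wₙ‖_{s₁} → 0`, hence `w + R w = v`.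

In higher norms `R` need not be a contraction, but the tame bound and the `H^{s₁}` bound on the
iterates propagate `‖wₙ‖_s ≤ 2‖v‖_s + 4 C(s) ‖v‖_{s₁}` by induction (because
`1 + 2·(1/4) ≤ 2` and `4·(1/4) + 2 ≤ 4`). Fatou in `H^s` passes both this bound and membership in
`H^s` to the limit `w`, so the inverse really preserves regularity.
-/

open scoped Real BigOperators
open MeasureTheory

noncomputable section

def jb (j : ℤ) : ℝ := max 1 |(j : ℝ)|

def fc (u : ℝ → ℂ) (j : ℤ) : ℂ :=
  (1 / (2 * (π : ℂ))) * ∫ x in (0:ℝ)..(2 * π), u x * Complex.exp (-Complex.I * (j : ℂ) * (x : ℂ))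

def fcR (u : ℝ → ℝ) (j : ℤ) : ℂ := fc (fun x => (u x : ℂ)) j

def sobNorm (s : ℝ) (u : ℝ → ℂ) : ℝ :=
  Real.sqrt (∑' j : ℤ, jb j ^ (2 * s) * ‖fc u j‖ ^ 2)

def memHs (s : ℝ) (u : ℝ → ℂ) : Prop :=
  Summable (fun j : ℤ => jb j ^ (2 * s) * ‖fc u j‖ ^ 2)

def sobNormR (s : ℝ) (u : ℝ → ℝ) : ℝ := sobNorm s (fun x => (u x : ℂ))
def memHsR (s : ℝ) (u : ℝ → ℝ) : Prop := memHs s (fun x => (u x : ℂ))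

def pairNorm (s : ℝ) (a b : ℝ → ℝ) : ℝ := sobNormR s a + sobNormR s b

def seqNorm (s : ℝ) (c : ℤ → ℂ) : ℝ :=
  Real.sqrt (∑' j : ℤ, jb j ^ (2 * s) * ‖c j‖ ^ 2)

def memSeq (s : ℝ) (c : ℤ → ℂ) : Prop :=
  Summable (fun j : ℤ => jb j ^ (2 * s) * ‖c j‖ ^ 2)

def smoothPer (u : ℝ → ℝ) : Prop :=
  ContDiff ℝ (⊤ : ℕ∞) u ∧ Function.Periodic u (2 * π)

def J1 (θ : ℝ) : ℝ :=
  ((1 / (2 * (π : ℂ))) * ∫ φ in (0:ℝ)..(2 * π),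
    Complex.exp (Complex.I * (θ : ℂ) * (Real.sin φ : ℂ)) * Complex.exp (-Complex.I * (φ : ℂ))).re

/-! ### The weighted sequence norm -/

theorem one_le_jb (j : ℤ) : 1 ≤ jb j := le_max_left _ _

theorem seqTerm_nonneg (s : ℝ) (u : ℤ → ℂ) (j : ℤ) : 0 ≤ jb j ^ (2 * s) * ‖u j‖ ^ 2 :=
  mul_nonneg (Real.rpow_nonneg (zero_le_one.trans (one_le_jb j)) _) (sq_nonneg _)

theorem seqNorm_nonneg (s : ℝ) (u : ℤ → ℂ) : 0 ≤ seqNorm s u := Real.sqrt_nonneg _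

theorem memSeq_zero (s : ℝ) : memSeq s 0 := by
  simp [memSeq]

theorem seqNorm_zero (s : ℝ) : seqNorm s 0 = 0 := by
  simp [seqNorm]

theorem memSeq.neg {s : ℝ} {u : ℤ → ℂ} (hu : memSeq s u) : memSeq s (-u) := by
  simpa [memSeq] using hu

theorem seqNorm_neg (s : ℝ) (u : ℤ → ℂ) : seqNorm s (-u) = seqNorm s u := by
  simp [seqNorm]

/-- The summand of the squared norm as a square, in the form needed for Minkowski's inequality. -/
theorem seqTerm_eq_rpow (s : ℝ) (u : ℤ → ℂ) (j : ℤ) :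
    jb j ^ (2 * s) * ‖u j‖ ^ 2 = (jb j ^ s * ‖u j‖) ^ (2 : ℝ) := by
  have hj : 0 ≤ jb j := zero_le_one.trans (one_le_jb j)
  rw [Real.mul_rpow (Real.rpow_nonneg hj _) (norm_nonneg _), ← Real.rpow_mul hj, mul_comm s 2]
  norm_num

/-- Minkowski's inequality for the weighted `ℓ²` norm. -/
theorem memSeq_add_and_seqNorm_add_le {s : ℝ} {u v : ℤ → ℂ} (hu : memSeq s u) (hv : memSeq s v) :
    memSeq s (u + v) ∧ seqNorm s (u + v) ≤ seqNorm s u + seqNorm s v := by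
  have hj : ∀ j, 0 ≤ jb j ^ s := fun j =>
    Real.rpow_nonneg (zero_le_one.trans (one_le_jb j)) _
  have hu' := hu
  have hv' := hv
  simp only [memSeq, seqTerm_eq_rpow] at hu' hv'
  obtain ⟨h1, h2⟩ := Real.Lp_add_le_tsum_of_nonneg (p := 2) (by norm_num)
    (fun j => mul_nonneg (hj j) (norm_nonneg (u j)))
    (fun j => mul_nonneg (hj j) (norm_nonneg (v j))) hu' hv'
  have hle : ∀ j, (jb j ^ s * ‖(u + v) j‖) ^ (2 : ℝ)
      ≤ (jb j ^ s * ‖u j‖ + jb j ^ s * ‖v j‖) ^ (2 : ℝ) := by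
    intro j
    apply Real.rpow_le_rpow (mul_nonneg (hj j) (norm_nonneg _)) _ (by norm_num)
    rw [← mul_add]
    exact mul_le_mul_of_nonneg_left (norm_add_le _ _) (hj j)
  have hs : memSeq s (u + v) := by
    simp only [memSeq, seqTerm_eq_rpow]
    exact Summable.of_nonneg_of_le
      (fun j => Real.rpow_nonneg (mul_nonneg (hj j) (norm_nonneg _)) _) hle h1
  refine ⟨hs, ?_⟩
  simp only [seqNorm, seqTerm_eq_rpow, Real.sqrt_eq_rpow]
  refine le_trans ?_ h2
  have hs' := hs
  simp only [memSeq, seqTerm_eq_rpow] at hs'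
  exact Real.rpow_le_rpow
    (tsum_nonneg fun j => Real.rpow_nonneg (mul_nonneg (hj j) (norm_nonneg _)) _)
    (hs'.tsum_le_tsum hle h1) (by norm_num)

theorem memSeq.sub {s : ℝ} {u v : ℤ → ℂ} (hu : memSeq s u) (hv : memSeq s v) :
    memSeq s (u - v) := by
  rw [sub_eq_add_neg]
  exact (memSeq_add_and_seqNorm_add_le hu hv.neg).1

theorem seqNorm_sub_le {s : ℝ} {u v : ℤ → ℂ} (hu : memSeq s u) (hv : memSeq s v) :
    seqNorm s (u - v) ≤ seqNorm s u + seqNorm s v := by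
  rw [sub_eq_add_neg, ← seqNorm_neg s v]
  exact (memSeq_add_and_seqNorm_add_le hu hv.neg).2

/-- The inclusion `H^s ⊆ H^t` for `t ≤ s`. -/
theorem memSeq.mono {s t : ℝ} (hts : t ≤ s) {u : ℤ → ℂ} (hu : memSeq s u) : memSeq t u := by
  refine Summable.of_nonneg_of_le (seqTerm_nonneg t u) (fun j => ?_) hu
  exact mul_le_mul_of_nonneg_right
    (Real.rpow_le_rpow_of_exponent_le (one_le_jb j) (by linarith)) (sq_nonneg _)

/-- Each coefficient is dominated by the norm, since the weights are at least `1`. -/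
theorem norm_apply_le_seqNorm {s : ℝ} (hs : 0 ≤ s) {u : ℤ → ℂ} (hu : memSeq s u) (j : ℤ) :
    ‖u j‖ ≤ seqNorm s u := by
  apply Real.le_sqrt_of_sq_le
  refine le_trans ?_ (hu.le_tsum j fun i _ => seqTerm_nonneg s u i)
  exact le_mul_of_one_le_left (sq_nonneg _)
    (Real.one_le_rpow (one_le_jb j) (by linarith))

/-- Fatou: a norm bound, together with membership in `H^s`, passes to coefficientwise limits. -/
theorem seqNorm_le_of_tendsto {s B : ℝ} {w : ℕ → ℤ → ℂ} {u : ℤ → ℂ}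
    (hw : ∀ n, memSeq s (w n)) (hB : ∀ n, seqNorm s (w n) ≤ B)
    (hlim : ∀ j, Filter.Tendsto (fun n => w n j) Filter.atTop (nhds (u j))) :
    memSeq s u ∧ seqNorm s u ≤ B := by
  have hB0 : 0 ≤ B := (seqNorm_nonneg s (w 0)).trans (hB 0)
  have key : ∀ F : Finset ℤ, ∑ j ∈ F, jb j ^ (2 * s) * ‖u j‖ ^ 2 ≤ B ^ 2 := by
    intro F
    have ht : Filter.Tendsto (fun n => ∑ j ∈ F, jb j ^ (2 * s) * ‖w n j‖ ^ 2) Filter.atTop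
        (nhds (∑ j ∈ F, jb j ^ (2 * s) * ‖u j‖ ^ 2)) :=
      tendsto_finsetSum _ fun j _ => ((hlim j).norm.pow 2).const_mul _
    refine le_of_tendsto' ht fun n => ?_
    refine ((hw n).sum_le_tsum F fun j _ => seqTerm_nonneg s (w n) j).trans ?_
    exact (Real.sqrt_le_left hB0).mp (hB n)
  have hu : memSeq s u := summable_of_sum_le (seqTerm_nonneg s u) key
  exact ⟨hu, Real.sqrt_le_left hB0 |>.mpr (hu.tsum_le_of_sum_le key)⟩

/-! ### The Picard iteration -/

/-- The Picard iterates `w₀ = 0`, `wₙ₊₁ = v - R wₙ` for the equation `w + R w = v`. -/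
def picard (R : (ℤ → ℂ) →ₗ[ℂ] (ℤ → ℂ)) (v : ℤ → ℂ) : ℕ → ℤ → ℂ
  | 0 => 0
  | n + 1 => v - R (picard R v n)

section Picard

variable {s1 : ℝ} {R : (ℤ → ℂ) →ₗ[ℂ] (ℤ → ℂ)}

theorem memSeq_picard {s : ℝ} (hmap : ∀ u : ℤ → ℂ, memSeq s u → memSeq s (R u))
    {v : ℤ → ℂ} (hv : memSeq s v) (n : ℕ) : memSeq s (picard R v n) := by
  induction n with
  | zero => exact memSeq_zero s
  | succ n ih => exact hv.sub (hmap _ ih)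

theorem seqNorm_picard_le (hmap : ∀ u : ℤ → ℂ, memSeq s1 u → memSeq s1 (R u))
    (hhalf : ∀ u : ℤ → ℂ, memSeq s1 u → seqNorm s1 (R u) ≤ 1 / 2 * seqNorm s1 u)
    {v : ℤ → ℂ} (hv : memSeq s1 v) (n : ℕ) :
    seqNorm s1 (picard R v n) ≤ 2 * seqNorm s1 v := by
  induction n with
  | zero =>
    rw [picard, seqNorm_zero]
    linarith [seqNorm_nonneg s1 v]
  | succ n ih =>
    have hn := memSeq_picard hmap hv n
    have h1 := seqNorm_sub_le hv (hmap _ hn)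
    have h2 := hhalf _ hn
    rw [picard]
    linarith

theorem seqNorm_picard_add_sub_le (hmap : ∀ u : ℤ → ℂ, memSeq s1 u → memSeq s1 (R u))
    (hhalf : ∀ u : ℤ → ℂ, memSeq s1 u → seqNorm s1 (R u) ≤ 1 / 2 * seqNorm s1 u)
    {v : ℤ → ℂ} (hv : memSeq s1 v) (k n : ℕ) :
    seqNorm s1 (picard R v (n + k) - picard R v n) ≤ 2 * seqNorm s1 v * (1 / 2) ^ n := by
  induction n with
  | zero =>
    simpa [picard] using seqNorm_picard_le hmap hhalf hv k
  | succ n ih =>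
    have heq : picard R v (n + 1 + k) - picard R v (n + 1)
        = -R (picard R v (n + k) - picard R v n) := by
      rw [Nat.add_right_comm, picard, picard, map_sub]
      abel
    have h := hhalf _ ((memSeq_picard hmap hv (n + k)).sub (memSeq_picard hmap hv n))
    rw [heq, seqNorm_neg, pow_succ]
    linarith

/-- Solvability of `w + R w = v` when `R` contracts `H^{s₁}` by `1/2`; the solution is produced as
the coefficientwise limit of the Picard iterates, which is what transfers higher norm bounds. -/
theorem exists_picard_limit (hs1 : 0 ≤ s1)
    (hmap : ∀ u : ℤ → ℂ, memSeq s1 u → memSeq s1 (R u))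
    (hhalf : ∀ u : ℤ → ℂ, memSeq s1 u → seqNorm s1 (R u) ≤ 1 / 2 * seqNorm s1 u)
    {v : ℤ → ℂ} (hv : memSeq s1 v) :
    ∃ w : ℤ → ℂ, (∀ j, Filter.Tendsto (fun n => picard R v n j) Filter.atTop (nhds (w j))) ∧
      memSeq s1 w ∧ w + R w = v := by
  have hmem := fun n => memSeq_picard hmap hv n
  have hcau := seqNorm_picard_add_sub_le hmap hhalf hv
  have hconv : ∀ j, ∃ z, Filter.Tendsto (fun n => picard R v n j) Filter.atTop (nhds z) := by
    intro j
    refine cauchySeq_tendsto_of_complete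
      (cauchySeq_of_le_geometric (1 / 2) (2 * seqNorm s1 v) (by norm_num) fun n => ?_)
    rw [dist_comm, dist_eq_norm]
    exact (norm_apply_le_seqNorm hs1 ((hmem (n + 1)).sub (hmem n)) j).trans (hcau 1 n)
  choose w hw using hconv
  have hwmem : memSeq s1 w :=
    (seqNorm_le_of_tendsto hmem (seqNorm_picard_le hmap hhalf hv) hw).1
  refine ⟨w, hw, hwmem, ?_⟩
  -- Fatou in `k`, with `n` fixed, turns the Cauchy estimate into a rate of convergence in `H^{s₁}`.
  have hrate : ∀ n, seqNorm s1 (w - picard R v n) ≤ 2 * seqNorm s1 v * (1 / 2) ^ n := by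
    intro n
    refine (seqNorm_le_of_tendsto (w := fun k => picard R v (n + k) - picard R v n)
      (fun k => (hmem _).sub (hmem _)) (fun k => hcau k n) fun j => ?_).2
    have h := (hw j).comp (Filter.tendsto_add_atTop_nat n)
    simp only [Function.comp_def, add_comm _ n] at h
    exact h.sub_const _
  have hbd : ∀ n, seqNorm s1 (w + R w - v) ≤ 2 * seqNorm s1 v * (1 / 2) ^ n := by
    intro n
    have heq : w + R w - v = (w - picard R v (n + 1)) + R (w - picard R v n) := by
      rw [picard, map_sub]
      abel
    have hd := hwmem.sub (hmem n)
    have h1 := (memSeq_add_and_seqNorm_add_le (hwmem.sub (hmem (n + 1))) (hmap _ hd)).2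
    have h2 := hhalf _ hd
    have h3 := hrate n
    have h4 := hrate (n + 1)
    rw [pow_succ] at h4
    rw [heq]
    linarith
  have hlim : Filter.Tendsto (fun n : ℕ => 2 * seqNorm s1 v * (1 / 2 : ℝ) ^ n) Filter.atTop
      (nhds 0) := by
    simpa using (tendsto_pow_atTop_nhds_zero_of_lt_one (r := (1 / 2 : ℝ)) (by norm_num)
      (by norm_num)).const_mul (2 * seqNorm s1 v)
  have h0 : seqNorm s1 (w + R w - v) ≤ 0 := ge_of_tendsto' hlim hbd
  have hres : memSeq s1 (w + R w - v) :=
    (memSeq_add_and_seqNorm_add_le hwmem (hmap _ hwmem)).1.sub hv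
  funext j
  have hj := (norm_apply_le_seqNorm hs1 hres j).trans h0
  exact sub_eq_zero.mp (norm_le_zero_iff.mp hj)

/-- `Id + R` is injective on `H^{s₁}`. -/
theorem eq_of_add_map_eq (hs1 : 0 ≤ s1)
    (hhalf : ∀ u : ℤ → ℂ, memSeq s1 u → seqNorm s1 (R u) ≤ 1 / 2 * seqNorm s1 u)
    {u w : ℤ → ℂ} (hu : memSeq s1 u) (hw : memSeq s1 w) (h : w + R w = u + R u) : w = u := by
  have hd := hw.sub hu
  have hneg : R (w - u) = -(w - u) := by
    rw [map_sub, eq_sub_of_add_eq' h]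
    abel
  have h1 := hhalf _ hd
  rw [hneg, seqNorm_neg] at h1
  funext j
  have hj : ‖(w - u) j‖ ≤ 0 := by linarith [norm_apply_le_seqNorm hs1 hd j]
  exact sub_eq_zero.mp (norm_le_zero_iff.mp hj)

end Picard

/-! ### Tame estimates for the inverse -/

/-- The tame bound on `R` propagates along the Picard iteration with constants independent of the
step, even though `R` need not be a contraction for `‖·‖_s`. -/
theorem seqNorm_picard_le_tame {s s1 c cs : ℝ} {R : (ℤ → ℂ) →ₗ[ℂ] (ℤ → ℂ)}
    (hc : c ≤ 1 / 4) (hcs : 0 ≤ cs)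
    (hmap : ∀ u : ℤ → ℂ, memSeq s u → memSeq s (R u))
    (hbound : ∀ u : ℤ → ℂ, memSeq s u →
      seqNorm s (R u) ≤ c * seqNorm s u + cs * seqNorm s1 u)
    {v : ℤ → ℂ} (hv : memSeq s v) (hlow : ∀ n, seqNorm s1 (picard R v n) ≤ 2 * seqNorm s1 v)
    (n : ℕ) :
    seqNorm s (picard R v n) ≤ 2 * seqNorm s v + 4 * cs * seqNorm s1 v := by
  have hp := mul_nonneg hcs (seqNorm_nonneg s1 v)
  have hv0 := seqNorm_nonneg s v
  induction n with
  | zero =>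
    rw [picard, seqNorm_zero]
    linarith
  | succ n ih =>
    have hn := memSeq_picard hmap hv n
    have h1 := seqNorm_sub_le hv (hmap _ hn)
    have h2 := hbound _ hn
    have h3 := mul_le_mul_of_nonneg_left (hlow n) hcs
    have h4 := mul_le_mul_of_nonneg_right hc (seqNorm_nonneg s (picard R v n))
    rw [picard]
    linarith

/-- invertibility, with tame estimates, of Id + ℛ for a 0-tame operator ℛ
with small low-norm tame constant. -/
theorem statement6 (s1 : ℝ) (hs1 : 1 ≤ s1)
    (R : (ℤ → ℂ) →ₗ[ℂ] (ℤ → ℂ))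
    (C : ℝ → ℝ) (hC0 : ∀ s, 0 ≤ C s) (hCmono : Monotone C)
    (hmap : ∀ s : ℝ, s1 ≤ s → ∀ u : ℤ → ℂ, memSeq s u → memSeq s (R u))
    (hbound : ∀ s : ℝ, s1 ≤ s → ∀ u : ℤ → ℂ, memSeq s u →
      seqNorm s (R u) ≤ C s1 * seqNorm s u + C s * seqNorm s1 u)
    (hsmall : C s1 < 1 / 4) :
    ∃ T : (ℤ → ℂ) → (ℤ → ℂ),
      (∀ u : ℤ → ℂ, memSeq s1 u → T (u + R u) = u) ∧
      (∀ v : ℤ → ℂ, memSeq s1 v →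
        memSeq s1 (T v) ∧ T v + R (T v) = v ∧ seqNorm s1 (T v) ≤ 2 * seqNorm s1 v) ∧
      (∀ s : ℝ, s1 ≤ s → ∀ v : ℤ → ℂ, memSeq s v →
        seqNorm s (T v) ≤ 2 * seqNorm s v + 4 * C s * seqNorm s1 v) := by
  have hs0 : 0 ≤ s1 := zero_le_one.trans hs1
  have hhalf : ∀ u : ℤ → ℂ, memSeq s1 u → seqNorm s1 (R u) ≤ 1 / 2 * seqNorm s1 u := by
    intro u hu
    have h1 := hbound s1 le_rfl u hu
    have h2 := mul_le_mul_of_nonneg_right hsmall.le (seqNorm_nonneg s1 u)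
    linarith
  have hmap1 := hmap s1 le_rfl
  have hsol : ∀ v : ℤ → ℂ, ∃ w : ℤ → ℂ, memSeq s1 v →
      (∀ j, Filter.Tendsto (fun n => picard R v n j) Filter.atTop (nhds (w j))) ∧
        memSeq s1 w ∧ w + R w = v := by
    intro v
    by_cases hv : memSeq s1 v
    · obtain ⟨w, hw⟩ := exists_picard_limit hs0 hmap1 hhalf hv
      exact ⟨w, fun _ => hw⟩
    · exact ⟨0, fun h => absurd h hv⟩
  choose T hT using hsol
  refine ⟨T, fun u hu => ?_, fun v hv => ?_, fun s hs v hv => ?_⟩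
  · obtain ⟨-, hm, he⟩ := hT _ (memSeq_add_and_seqNorm_add_le hu (hmap1 u hu)).1
    exact eq_of_add_map_eq hs0 hhalf hu hm he
  · obtain ⟨hl, hm, he⟩ := hT v hv
    exact ⟨hm, he, (seqNorm_le_of_tendsto (fun n => memSeq_picard hmap1 hv n)
      (seqNorm_picard_le hmap1 hhalf hv) hl).2⟩
  · have hv1 := hv.mono hs
    exact (seqNorm_le_of_tendsto (fun n => memSeq_picard (hmap s hs) hv n)
      (seqNorm_picard_le_tame hsmall.le (hC0 s) (hmap s hs) (hbound s hs) hv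
        (seqNorm_picard_le hmap1 hhalf hv1)) (hT v hv1).1).2
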